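/- arXiv:2503.01644 — 5 statements merged into one kernel-verified Lean document; each statement's English description precedes it below -/
import Mathlib

section
/- Let P₂ be a meet-semilattice with least element 0 and let P₁ ⊆ P₂ be a meet-subsemilattice containing 0 that preserves finite covers. Let F be a tight filter of P₂ with F ∩ P₁ ≠ ∅. Then F ∩ P₁ is a tight filter of P₁: it is a filter of P₁, and for every x ∈ F ∩ P₁ and every finite cover C of x within P₁, at least one element of C belongs to F ∩ P₁. -/
/-- A filter of a meet-semilattice with 0: nonempty, proper, upward closed,
and closed under meets. -/
def MeetFilter {P : Type*} [SemilatticeInf P] (F : Set P) : Prop :=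
  F.Nonempty ∧ F ≠ Set.univ ∧ (∀ x ∈ F, ∀ y : P, x ≤ y → y ∈ F) ∧
    ∀ x ∈ F, ∀ y ∈ F, x ⊓ y ∈ F

/-- A filter of the meet-subsemilattice `Q` of `P`. -/
def MeetFilterIn {P : Type*} [SemilatticeInf P] (Q : Set P) (F : Set P) : Prop :=
  F ⊆ Q ∧ F.Nonempty ∧ F ≠ Q ∧ (∀ x ∈ F, ∀ z ∈ Q, x ≤ z → z ∈ F) ∧
    ∀ x ∈ F, ∀ y ∈ F, x ⊓ y ∈ F

/-- `C` is a finite cover of `x` within the meet-subsemilattice `Q ⊆ P`. -/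
def FinCoverIn {P : Type*} [SemilatticeInf P] [OrderBot P]
    (Q : Set P) (x : P) (C : Finset P) : Prop :=
  (↑C : Set P) ⊆ Q ∧ (∀ c ∈ C, c ≤ x) ∧
    ∀ y ∈ Q, y ≠ ⊥ → y ≤ x → ∃ c ∈ C, c ⊓ y ≠ ⊥

/-- `C` is a finite cover of `x` within the whole meet-semilattice `P`. -/
def FinCover {P : Type*} [SemilatticeInf P] [OrderBot P] (x : P) (C : Finset P) : Prop :=
  (∀ c ∈ C, c ≤ x) ∧ ∀ y : P, y ≠ ⊥ → y ≤ x → ∃ c ∈ C, c ⊓ y ≠ ⊥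

section Filters

variable {P : Type*} [SemilatticeInf P] {F Q : Set P}

theorem MeetFilter.bot_notMem [OrderBot P] (hF : MeetFilter F) : ⊥ ∉ F := by
  obtain ⟨-, hproper, hupper, -⟩ := hF
  exact fun hbot ↦ hproper (Set.eq_univ_of_forall fun y ↦ hupper ⊥ hbot y bot_le)

theorem MeetFilter.meetFilterIn_inter (hF : MeetFilter F) (hQ : InfClosed Q)
    (hne : (F ∩ Q).Nonempty) (hQF : ¬Q ⊆ F) : MeetFilterIn Q (F ∩ Q) := by
  obtain ⟨-, -, hupper, hinf⟩ := hF
  have hproper : F ∩ Q ≠ Q := mt Set.inter_eq_right.mp hQF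
  have hupperIn : ∀ x ∈ F ∩ Q, ∀ z ∈ Q, x ≤ z → z ∈ F ∩ Q :=
    fun x hx z hz hxz ↦ ⟨hupper x hx.1 z hxz, hz⟩
  have hinfIn : ∀ x ∈ F ∩ Q, ∀ y ∈ F ∩ Q, x ⊓ y ∈ F ∩ Q :=
    fun x hx y hy ↦ ⟨hinf x hx.1 y hy.1, hQ hx.2 hy.2⟩
  exact ⟨Set.inter_subset_right, hne, hproper, hupperIn, hinfIn⟩

end Filters

section Tightness

variable {P : Type*} [SemilatticeInf P] [OrderBot P]

/-- The tightness condition on a filter `F` of `P`, stated for an arbitrary set `F`: every finite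
cover of an element of `F` meets `F`. -/
def Tight (F : Set P) : Prop :=
  ∀ x ∈ F, ∀ C : Finset P, FinCover x C → ∃ c ∈ C, c ∈ F

/-- The tightness condition relative to a meet-subsemilattice `Q` of `P`: only finite covers
within `Q` are tested. -/
def TightIn (Q F : Set P) : Prop :=
  ∀ x ∈ F, ∀ C : Finset P, FinCoverIn Q x C → ∃ c ∈ C, c ∈ F

/-- The inclusion of the meet-subsemilattice `Q` into `P` preserves finite covers. -/
def PreservesFinCovers (Q : Set P) : Prop :=
  ∀ x ∈ Q, ∀ C : Finset P, FinCoverIn Q x C → FinCover x C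

theorem Tight.tightIn_inter {F Q : Set P} (hF : Tight F) (hQ : PreservesFinCovers Q) :
    TightIn Q (F ∩ Q) := by
  rintro x ⟨hxF, hxQ⟩ C hC
  obtain ⟨c, hcC, hcF⟩ := hF x hxF C (hQ x hxQ C hC)
  exact ⟨c, hcC, hcF, hC.1 hcC⟩

end Tightness

theorem stmt3 {P : Type*} [SemilatticeInf P] [OrderBot P]
    (P₁ : Set P) (hbot : ⊥ ∈ P₁) (hinf : ∀ x ∈ P₁, ∀ y ∈ P₁, x ⊓ y ∈ P₁)
    (hpres : ∀ x ∈ P₁, ∀ C : Finset P, FinCoverIn P₁ x C → FinCover x C)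
    (F : Set P) (hF : MeetFilter F)
    (htight : ∀ x ∈ F, ∀ C : Finset P, FinCover x C → ∃ c ∈ C, c ∈ F)
    (hne : (F ∩ P₁).Nonempty) :
    MeetFilterIn P₁ (F ∩ P₁) ∧
      ∀ x ∈ F ∩ P₁, ∀ C : Finset P, FinCoverIn P₁ x C → ∃ c ∈ C, c ∈ F ∩ P₁ := by
  have hP₁ : InfClosed P₁ := fun x hx y hy ↦ hinf x hx y hy
  have hP₁F : ¬P₁ ⊆ F := fun hsub ↦ hF.bot_notMem (hsub hbot)
  have hF_tight : Tight F := htight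
  exact ⟨hF.meetFilterIn_inter hP₁ hne hP₁F, hF_tight.tightIn_inter hpres⟩
end

section
/- Let P be a meet-semilattice with least element 0. Let w, z ∈ P with w ≤ z, and let z₁, …, zₙ ∈ P with zᵢ ≤ z and zᵢ ⊓ w = 0 for all i, such that {z₁, …, zₙ, w} is a finite cover of z. Then for every tight filter ξ of P: w ∈ ξ if and only if z ∈ ξ and zᵢ ∉ ξ for all i ∈ {1, …, n}. -/
namespace MeetFilter

variable {P : Type*} [SemilatticeInf P] {F : Set P} {x y : P}

theorem mem_of_le (hF : MeetFilter F) (hxy : x ≤ y) (hx : x ∈ F) : y ∈ F :=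
  hF.2.2.1 x hx y hxy

theorem inf_mem (hF : MeetFilter F) (hx : x ∈ F) (hy : y ∈ F) : x ⊓ y ∈ F :=
  hF.2.2.2 x hx y hy

variable [OrderBot P]

theorem bot_notMem_s5 (hF : MeetFilter F) : ⊥ ∉ F := fun hbot =>
  hF.2.1 (Set.eq_univ_of_forall fun _ => hF.mem_of_le bot_le hbot)

theorem notMem_of_disjoint (hF : MeetFilter F) (hxy : Disjoint x y) (hy : y ∈ F) : x ∉ F :=
  fun hx => hF.bot_notMem_s5 (hxy.eq_bot ▸ hF.inf_mem hx hy)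

end MeetFilter

/-- The covering condition that makes a filter tight: every finite cover of a member of `F`
meets `F`. That `F` is a filter is not part of the definition, so a tight filter is an `F`
satisfying both `MeetFilter F` and `IsTight F`. -/
def IsTight {P : Type*} [SemilatticeInf P] [OrderBot P] (F : Set P) : Prop :=
  ∀ x ∈ F, ∀ C : Finset P, FinCover x C → ∃ c ∈ C, c ∈ F

theorem IsTight.mem_of_finCover_insert {P : Type*} [SemilatticeInf P] [OrderBot P]
    [DecidableEq P] {F : Set P} {w z : P} {C : Finset P} (hF : IsTight F)
    (hcov : FinCover z (insert w C)) (hz : z ∈ F) (hC : ∀ c ∈ C, c ∉ F) : w ∈ F := by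
  obtain ⟨c, hc, hcF⟩ := hF z hz _ hcov
  obtain rfl | hcC := Finset.mem_insert.1 hc
  · exact hcF
  · exact absurd hcF (hC c hcC)

theorem stmt5 {P : Type*} [SemilatticeInf P] [OrderBot P] [DecidableEq P]
    (w z : P) (hwz : w ≤ z) (C : Finset P)
    (hC : ∀ c ∈ C, c ≤ z ∧ c ⊓ w = ⊥)
    (hcov : FinCover z (insert w C))
    (ξ : Set P) (hξ : MeetFilter ξ)
    (htight : ∀ x ∈ ξ, ∀ D : Finset P, FinCover x D → ∃ c ∈ D, c ∈ ξ) :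
    w ∈ ξ ↔ z ∈ ξ ∧ ∀ c ∈ C, c ∉ ξ := by
  constructor
  · intro hw
    exact ⟨hξ.mem_of_le hwz hw, fun c hc =>
      hξ.notMem_of_disjoint (disjoint_iff.2 (hC c hc).2) hw⟩
  · rintro ⟨hz, hCξ⟩
    exact IsTight.mem_of_finCover_insert htight hcov hz hCξ
end

section
/- Let S be an inverse semigroup with zero, purely graded by a group G via φ : S \ {0} → G. Let x be a nonzero idempotent of S and let s, t ∈ S \ {0} with φ(s) = φ(t), x·(s*·s) = x, and x·(t*·t) = x. Then s·x·s* = t·x·t*. -/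
/-!
Since s and t have the same degree, s x t* has the same degree as the idempotent t x t*, so purity
of the grading makes s x t* idempotent; likewise t x s*. Idempotents commute, and the two products
of this pair are s x s* and t x t*.
-/

section Semigroup

variable {S : Type*} [Semigroup S]

theorem isIdempotentElem_mul_of_mul_mul_eq {s s' : S} (h : s * s' * s = s) :
    IsIdempotentElem (s' * s) := by
  rw [IsIdempotentElem, mul_assoc, ← mul_assoc s, h]

theorem sandwich_mul_sandwich_of_mul_eq {x t t' : S} (hx : IsIdempotentElem x)
    (hxt : x * (t' * t) = x) (s r : S) : s * x * t' * (t * x * r) = s * x * r :=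
  calc
    s * x * t' * (t * x * r) = s * (x * (t' * t) * x) * r := by simp only [mul_assoc]
    _ = s * x * r := by rw [hxt, hx.eq]

end Semigroup

/-- A pure grading of a semigroup with zero, by which idempotency of a nonzero element can be read
off from its degree. The degree map is total, and its value at `0` is unconstrained. -/
structure IsPureGrading {S G : Type*} [SemigroupWithZero S] [MulOneClass G] (φ : S → G) :
    Prop where
  map_mul : ∀ a b : S, a ≠ 0 → b ≠ 0 → a * b ≠ 0 → φ (a * b) = φ a * φ b
  map_eq_one_iff : ∀ s : S, s ≠ 0 → (φ s = 1 ↔ IsIdempotentElem s)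

namespace IsPureGrading

variable {S G : Type*} [SemigroupWithZero S] [MulOneClass G] {φ : S → G}

theorem map_mul_idempotent_mul (hφ : IsPureGrading φ) {s x r : S} (hx : IsIdempotentElem x)
    (h0 : s * x * r ≠ 0) : φ (s * x * r) = φ s * φ r := by
  have hsx0 : s * x ≠ 0 := left_ne_zero_of_mul h0
  have hx0 : x ≠ 0 := right_ne_zero_of_mul hsx0
  rw [hφ.map_mul _ _ hsx0 (right_ne_zero_of_mul h0) h0,
    hφ.map_mul _ _ (left_ne_zero_of_mul hsx0) hx0 hsx0, (hφ.map_eq_one_iff x hx0).2 hx, mul_one]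

theorem isIdempotentElem_mul_mul (hφ : IsPureGrading φ) {x s t t' : S} (hx : IsIdempotentElem x)
    (hst : φ s = φ t) (hxt : x * (t' * t) = x) (hsx0 : s * x ≠ 0) (htx0 : t * x ≠ 0) :
    IsIdempotentElem (s * x * t') := by
  have mul_mul_ne_zero {r : S} (hrx0 : r * x ≠ 0) : r * x * t' ≠ 0 := by
    refine left_ne_zero_of_mul (b := t) ?_
    rwa [mul_assoc, mul_assoc, hxt]
  have ht : IsIdempotentElem (t * x * t') := sandwich_mul_sandwich_of_mul_eq hx hxt t t'
  refine (hφ.map_eq_one_iff _ (mul_mul_ne_zero hsx0)).1 ?_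
  calc
    φ (s * x * t') = φ s * φ t' := hφ.map_mul_idempotent_mul hx (mul_mul_ne_zero hsx0)
    _ = φ t * φ t' := by rw [hst]
    _ = φ (t * x * t') := (hφ.map_mul_idempotent_mul hx (mul_mul_ne_zero htx0)).symm
    _ = 1 := (hφ.map_eq_one_iff _ (mul_mul_ne_zero htx0)).2 ht

end IsPureGrading

theorem stmt7_general {S G : Type*} [SemigroupWithZero S] [MulOneClass G]
    (hcomm : ∀ e f : S, IsIdempotentElem e → IsIdempotentElem f → Commute e f)
    {φ : S → G} (hφ : IsPureGrading φ) {x s s' t t' : S} (hx : IsIdempotentElem x)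
    (hs : IsIdempotentElem (s' * s)) (ht : IsIdempotentElem (t' * t)) (hst : φ s = φ t)
    (hxs : x * (s' * s) = x) (hxt : x * (t' * t) = x) :
    s * x * s' = t * x * t' := by
  obtain rfl | hx0 := eq_or_ne x 0
  · simp
  have mul_x_ne_zero {r r' : S} (hr : IsIdempotentElem (r' * r)) (hxr : x * (r' * r) = x) :
      r * x ≠ 0 := by
    refine right_ne_zero_of_mul (a := r') ?_
    rwa [← mul_assoc, (hcomm _ _ hr hx).eq, hxr]
  have hsx0 : s * x ≠ 0 := mul_x_ne_zero hs hxs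
  have htx0 : t * x ≠ 0 := mul_x_ne_zero ht hxt
  have he : IsIdempotentElem (s * x * t') := hφ.isIdempotentElem_mul_mul hx hst hxt hsx0 htx0
  have hf : IsIdempotentElem (t * x * s') := hφ.isIdempotentElem_mul_mul hx hst.symm hxs htx0 hsx0
  calc
    s * x * s' = s * x * t' * (t * x * s') := (sandwich_mul_sandwich_of_mul_eq hx hxt s s').symm
    _ = t * x * s' * (s * x * t') := (hcomm _ _ he hf).eq
    _ = t * x * t' := sandwich_mul_sandwich_of_mul_eq hx hxs t t'

theorem stmt7 {S G : Type*} [SemigroupWithZero S] [Group G]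
    -- the generalized-inverse operation of the inverse semigroup `S`
    (istar : S → S)
    (hinv1 : ∀ s : S, s * istar s * s = s)
    (hinv2 : ∀ s : S, istar s * s * istar s = istar s)
    (hcomm : ∀ e f : S, e * e = e → f * f = f → e * f = f * e)
    -- pure grading of `S` by `G`
    (φ : S → G)
    (hgr : ∀ a b : S, a ≠ 0 → b ≠ 0 → a * b ≠ 0 → φ (a * b) = φ a * φ b)
    (hpure : ∀ s : S, s ≠ 0 → (φ s = 1 ↔ s * s = s))
    -- data of the statement
    (x s t : S) (hx : x * x = x) (hx0 : x ≠ 0)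
    (hs0 : s ≠ 0) (ht0 : t ≠ 0) (hst : φ s = φ t)
    (hxs : x * (istar s * s) = x) (hxt : x * (istar t * t) = x) :
    s * x * istar s = t * x * istar t :=
  stmt7_general hcomm ⟨hgr, hpure⟩ hx (isIdempotentElem_mul_of_mul_mul_eq (hinv1 s))
    (isIdempotentElem_mul_of_mul_mul_eq (hinv1 t)) hst hxs hxt
end

section
/- Let S be an inverse semigroup with zero, purely graded by a group G via φ : S \ {0} → G, and let g, h ∈ G. Then E_g ∩ E_{g·h} = {u·x·u* : u ∈ S \ {0}, φ(u) = g, x a nonzero idempotent with x·(u*·u) = x and x ∈ E_{g⁻¹} ∩ E_h} ∪ {0}. In other words, the partial action φ_g : x ↦ u·x·u* maps E_{g⁻¹} ∩ E_h onto E_g ∩ E_{g·h}. -/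
/-- For a pure grading `φ` of an inverse semigroup `S` (with generalized-inverse
operation `istar`) by a group `G`, `Eg istar φ g` is the set
`{x ∈ E : x ≤ s·s*` for some nonzero `s` with `φ s = g} ∪ {0}`,
where `x ≤ e` for idempotents means `x·e = x`. -/
def Eg {S G : Type*} [SemigroupWithZero S] [Group G]
    (istar : S → S) (φ : S → G) (g : G) : Set S :=
  {x | x = 0 ∨ (x * x = x ∧ x ≠ 0 ∧ ∃ s : S, s ≠ 0 ∧ φ s = g ∧ x * (s * istar s) = x)}

/-!
Write `s⋆` for `istar s`. Since `s * s⋆ * s = s` and idempotents commute, an idempotent `x` lies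
below `s * s⋆` exactly when `s ∣ x`. So `E_g` consists of `0` and the idempotents divisible by an
element of degree `g`, and as `t ∣ x` gives `u * t ∣ u * x * v`, the map `x ↦ u * x * v` sends the
idempotents of `E_h` below `v * u` into `E_{φ(u)h}`. Applying this with `(u, v) = (s, s⋆)` and with
`(u, v) = (s⋆, s)`, for the degree `h` in question and for the neutral degree, gives the two
inclusions.
-/

section Semigroup

variable {S : Type*} [Semigroup S] {s t u v x : S}

theorem isIdempotentElem_mul_of_mul_mul_eq_self (hst : s * t * s = s) :
    IsIdempotentElem (s * t) := by
  rw [IsIdempotentElem, ← mul_assoc, hst]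

theorem mul_mul_eq_self_iff_dvd (hst : s * t * s = s) (hx : Commute x (s * t)) :
    x * (s * t) = x ↔ s ∣ x := by
  rw [hx.eq]
  constructor
  · intro hstx
    exact ⟨t * x, by rw [← mul_assoc, hstx]⟩
  · rintro ⟨c, rfl⟩
    rw [← mul_assoc, hst]

theorem isIdempotentElem_conj (hx : IsIdempotentElem x) (hxvu : x * (v * u) = x) :
    IsIdempotentElem (u * x * v) :=
  calc u * x * v * (u * x * v)
    _ = u * (x * (v * u) * x) * v := by simp only [mul_assoc]
    _ = u * x * v := by rw [hxvu, hx.eq]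

theorem conj_conj_eq_self (hx : Commute x (s * t)) (hxst : x * (s * t) = x) :
    s * (t * x * s) * t = x :=
  calc s * (t * x * s) * t
    _ = s * t * x * (s * t) := by simp only [mul_assoc]
    _ = x := by rw [← hx.eq, hxst, hxst]

end Semigroup

/-- A grading of the nonzero elements of a semigroup with zero: `φ` is multiplicative wherever the
product does not vanish, and its value at `0` is irrelevant. -/
def IsGrading {S G : Type*} [SemigroupWithZero S] [Mul G] (φ : S → G) : Prop :=
  ∀ a b : S, a * b ≠ 0 → φ (a * b) = φ a * φ b

section Grading

variable {S G : Type*} [SemigroupWithZero S] [Group G] {istar : S → S} {φ : S → G} {g h : G}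
  {s t u v x : S}

namespace IsGrading

theorem map_eq_one_of_isIdempotentElem (hφ : IsGrading φ) (hx : IsIdempotentElem x)
    (hx0 : x ≠ 0) : φ x = 1 := by
  have hmul : φ (x * x) = φ x * φ x := hφ x x (by rwa [hx.eq])
  rwa [hx.eq, left_eq_mul] at hmul

theorem map_eq_inv_of_mul_mul_eq_self (hφ : IsGrading φ) (hs0 : s ≠ 0) (hst : s * t * s = s) :
    φ t = (φ s)⁻¹ := by
  have hst0 : s * t ≠ 0 := left_ne_zero_of_mul (hst.symm ▸ hs0)
  refine eq_inv_of_mul_eq_one_right ?_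
  rw [← hφ s t hst0]
  exact hφ.map_eq_one_of_isIdempotentElem (isIdempotentElem_mul_of_mul_mul_eq_self hst) hst0

end IsGrading

theorem isIdempotentElem_of_mem_Eg (hx : x ∈ Eg istar φ g) : IsIdempotentElem x := by
  obtain rfl | ⟨hxx, -⟩ := hx
  · exact IsIdempotentElem.zero
  · exact hxx

theorem mem_Eg_iff_dvd (hinner : ∀ s : S, s * istar s * s = s)
    (hcomm : ∀ e f : S, e * e = e → f * f = f → e * f = f * e) :
    x ∈ Eg istar φ g ↔ x = 0 ∨ IsIdempotentElem x ∧ ∃ s, φ s = g ∧ s ∣ x := by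
  have hdvd (hxx : IsIdempotentElem x) (s : S) : x * (s * istar s) = x ↔ s ∣ x :=
    mul_mul_eq_self_iff_dvd (hinner s)
      (hcomm _ _ hxx (isIdempotentElem_mul_of_mul_mul_eq_self (hinner s)))
  constructor
  · rintro (hx0 | ⟨hxx, -, s, -, hs, hxs⟩)
    · exact .inl hx0
    · exact .inr ⟨hxx, s, hs, (hdvd hxx s).1 hxs⟩
  · rintro (hx0 | ⟨hxx, s, hs, hsx⟩)
    · exact .inl hx0
    · refine or_iff_not_imp_left.2 fun hx0 => ⟨hxx, hx0, s, ?_, hs, (hdvd hxx s).2 hsx⟩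
      rintro rfl
      obtain ⟨c, rfl⟩ := hsx
      exact hx0 (zero_mul c)

theorem mem_Eg_one_of_isIdempotentElem (hinner : ∀ s : S, s * istar s * s = s)
    (hcomm : ∀ e f : S, e * e = e → f * f = f → e * f = f * e) (hφ : IsGrading φ)
    (hx : IsIdempotentElem x) : x ∈ Eg istar φ 1 := by
  rw [mem_Eg_iff_dvd hinner hcomm, or_iff_not_imp_left]
  exact fun hx0 => ⟨hx, x, hφ.map_eq_one_of_isIdempotentElem hx hx0, x, hx.symm⟩

theorem conj_mem_Eg_mul (hinner : ∀ s : S, s * istar s * s = s)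
    (hcomm : ∀ e f : S, e * e = e → f * f = f → e * f = f * e) (hφ : IsGrading φ)
    (hx : x ∈ Eg istar φ h) (hxvu : x * (v * u) = x) :
    u * x * v ∈ Eg istar φ (φ u * h) := by
  have hidem : IsIdempotentElem (u * x * v) :=
    isIdempotentElem_conj (isIdempotentElem_of_mem_Eg hx) hxvu
  rw [mem_Eg_iff_dvd hinner hcomm, or_iff_not_imp_left] at hx ⊢
  intro hy0
  have hux0 : u * x ≠ 0 := left_ne_zero_of_mul hy0
  obtain ⟨-, t, rfl, c, rfl⟩ := hx (right_ne_zero_of_mul hux0)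
  have hut0 : u * t ≠ 0 := left_ne_zero_of_mul (mul_assoc u t c ▸ hux0)
  exact ⟨hidem, u * t, hφ u t hut0, c * v, by simp only [mul_assoc]⟩

theorem conj_mem_Eg_inter (hinner : ∀ s : S, s * istar s * s = s)
    (hcomm : ∀ e f : S, e * e = e → f * f = f → e * f = f * e) (hφ : IsGrading φ)
    (hx : x ∈ Eg istar φ h) (hxvu : x * (v * u) = x) :
    u * x * v ∈ Eg istar φ (φ u) ∩ Eg istar φ (φ u * h) := by
  have hx_one : x ∈ Eg istar φ 1 :=
    mem_Eg_one_of_isIdempotentElem hinner hcomm hφ (isIdempotentElem_of_mem_Eg hx)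
  have hmem_one := conj_mem_Eg_mul hinner hcomm hφ hx_one hxvu
  rw [mul_one] at hmem_one
  exact ⟨hmem_one, conj_mem_Eg_mul hinner hcomm hφ hx hxvu⟩

end Grading

theorem stmt9_general {S G : Type*} [SemigroupWithZero S] [Group G]
    (istar : S → S)
    (hinner : ∀ s : S, s * istar s * s = s)
    (hcomm : ∀ e f : S, e * e = e → f * f = f → e * f = f * e)
    (φ : S → G) (hφ : IsGrading φ) (g h : G) :
    Eg istar φ g ∩ Eg istar φ (g * h) =
      {y : S | y = 0 ∨ ∃ u x : S, u ≠ 0 ∧ φ u = g ∧ x * x = x ∧ x ≠ 0 ∧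
        x * (istar u * u) = x ∧ x ∈ Eg istar φ g⁻¹ ∧ x ∈ Eg istar φ h ∧
        y = u * x * istar u} := by
  ext y
  constructor
  · rintro ⟨rfl | ⟨hyy, hy0, s, hs0, rfl, hys⟩, hyh⟩
    · exact .inl rfl
    have hy : s * (istar s * y * s) * istar s = y :=
      conj_conj_eq_self (hcomm _ _ hyy (isIdempotentElem_mul_of_mul_mul_eq_self (hinner s))) hys
    have hx0 : istar s * y * s ≠ 0 :=
      right_ne_zero_of_mul (left_ne_zero_of_mul (hy.symm ▸ hy0))
    have hxs : istar s * y * s * (istar s * s) = istar s * y * s := by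
      rw [mul_assoc _ s, ← mul_assoc s, hinner]
    obtain ⟨hx_inv, hx_mem⟩ := conj_mem_Eg_inter hinner hcomm hφ hyh hys
    rw [hφ.map_eq_inv_of_mul_mul_eq_self hs0 (hinner s)] at hx_inv hx_mem
    rw [inv_mul_cancel_left] at hx_mem
    exact .inr ⟨s, istar s * y * s, hs0, rfl, isIdempotentElem_of_mem_Eg hx_mem, hx0, hxs,
      hx_inv, hx_mem, hy.symm⟩
  · rintro (rfl | ⟨u, x, -, rfl, -, -, hxu, -, hxh, rfl⟩)
    · exact ⟨.inl rfl, .inl rfl⟩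
    · exact conj_mem_Eg_inter hinner hcomm hφ hxh hxu

theorem stmt9 {S G : Type*} [SemigroupWithZero S] [Group G]
    (istar : S → S)
    (hinv1 : ∀ s : S, s * istar s * s = s)
    (hinv2 : ∀ s : S, istar s * s * istar s = istar s)
    (hcomm : ∀ e f : S, e * e = e → f * f = f → e * f = f * e)
    (φ : S → G)
    (hgr : ∀ a b : S, a ≠ 0 → b ≠ 0 → a * b ≠ 0 → φ (a * b) = φ a * φ b)
    (hpure : ∀ s : S, s ≠ 0 → (φ s = 1 ↔ s * s = s))
    (g h : G) :
    Eg istar φ g ∩ Eg istar φ (g * h) =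
      {y : S | y = 0 ∨ ∃ u x : S, u ≠ 0 ∧ φ u = g ∧ x * x = x ∧ x ≠ 0 ∧
        x * (istar u * u) = x ∧ x ∈ Eg istar φ g⁻¹ ∧ x ∈ Eg istar φ h ∧
        y = u * x * istar u} :=
  stmt9_general istar hinv1 hcomm φ
    (fun a b hab => hgr a b (left_ne_zero_of_mul hab) (right_ne_zero_of_mul hab) hab) g h
end

section
/- Let S be an inverse semigroup with zero, purely graded by a group G via φ : S \ {0} → G. Let s, t, u ∈ S \ {0} with φ(u) = φ(s)·φ(t), and let x be a nonzero idempotent with x·(t*·t) = x, (t·x·t*)·(s*·s) = t·x·t*, and x·(u*·u) = x. Then s·(t·x·t*)·s* = u·x·u*. (This is the cocycle identity φ_{φ(s)}(φ_{φ(t)}(x)) = φ_{φ(s)·φ(t)}(x) for the partial action on idempotents.) -/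
/-!
Two elements `a`, `b` of equal degree with the same source `a' * a = b' * b` also have the same
range: `a * b'` and `b * a'` have degree `1`, so purity makes them idempotents, and commuting them
gives `a * a' = a * b' * (b * a') = b * a' * (a * b') = b * b'`. The cocycle identity is this
fact for the restrictions `s * t * x` and `u * x`, both of which have source `x`.
-/

section Semigroup

variable {S : Type*} [Semigroup S] {a a' s s' t t' x : S}

theorem source_restrict_eq (hx : IsIdempotentElem x) (hxa : x * (a' * a) = x) :
    x * a' * (a * x) = x := by
  rw [← mul_assoc, mul_assoc x, hxa, hx]

theorem mul_source_mul_eq_self_of_conj (hx : IsIdempotentElem x) (hxt : x * (t' * t) = x)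
    (htxs : t * x * t' * (s' * s) = t * x * t') : x * (t' * s' * (s * t)) = x := by
  have hxts : x * t' * (s' * s) = x * t' := calc
    x * t' * (s' * s) = x * (t' * t) * x * t' * (s' * s) := by rw [hxt, hx]
    _ = x * t' * (t * x * t' * (s' * s)) := by simp only [mul_assoc]
    _ = x * (t' * t) * x * t' := by rw [htxs]; simp only [mul_assoc]
    _ = x * t' := by rw [hxt, hx]
  calc
    x * (t' * s' * (s * t)) = x * t' * (s' * s) * t := by simp only [mul_assoc]
    _ = x := by rw [hxts, mul_assoc, hxt]

end Semigroup

/-- A pure grading of a semigroup with zero: a degree map which is multiplicative on nonzero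
products and whose fibre over `1` consists of the nonzero idempotents. The degree is encoded as a
total function; its value at `0` is arbitrary. -/
structure IsPureGrading_s10 {S G : Type*} [SemigroupWithZero S] [MulOneClass G] (φ : S → G) :
    Prop where
  map_mul {a b : S} : a * b ≠ 0 → φ (a * b) = φ a * φ b
  map_eq_one_iff {a : S} : a ≠ 0 → (φ a = 1 ↔ IsIdempotentElem a)

namespace IsPureGrading_s10

variable {S G : Type*} [SemigroupWithZero S] [MulOneClass G] {φ : S → G} {a a' b b' x : S}

theorem map_mul_of_isIdempotentElem_right (hφ : IsPureGrading_s10 φ) (hx : IsIdempotentElem x)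
    (hax : a * x ≠ 0) : φ (a * x) = φ a := by
  rw [hφ.map_mul hax, (hφ.map_eq_one_iff (right_ne_zero_of_mul hax)).2 hx, mul_one]

theorem isIdempotentElem_mul_of_map_eq (hφ : IsPureGrading_s10 φ) (hab : φ a = φ b)
    (hb : b * b' * b = b) (hs : a * b' * b = a) (ha : a ≠ 0) : IsIdempotentElem (a * b') := by
  have hab0 : a * b' ≠ 0 := left_ne_zero_of_mul (hs.trans_ne ha)
  have hb0 : b ≠ 0 := right_ne_zero_of_mul (hs.trans_ne ha)
  have hbb0 : b * b' ≠ 0 := left_ne_zero_of_mul (hb.trans_ne hb0)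
  have hbb : IsIdempotentElem (b * b') := by rw [IsIdempotentElem, ← mul_assoc, hb]
  rw [← hφ.map_eq_one_iff hab0, hφ.map_mul hab0, hab, ← hφ.map_mul hbb0]
  exact (hφ.map_eq_one_iff hbb0).2 hbb

theorem range_eq_of_source_eq (hφ : IsPureGrading_s10 φ)
    (hcomm : ∀ e f : S, IsIdempotentElem e → IsIdempotentElem f → Commute e f)
    (hab : φ a = φ b) (ha : a * a' * a = a) (hb : b * b' * b = b) (hs : a' * a = b' * b)
    (ha0 : a ≠ 0) : a * a' = b * b' := by
  have hab' : a * b' * b = a := by rw [mul_assoc, ← hs, ← mul_assoc, ha]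
  have hba' : b * a' * a = b := by rw [mul_assoc, hs, ← mul_assoc, hb]
  have hb0 : b ≠ 0 := right_ne_zero_of_mul (hab'.trans_ne ha0)
  have he := hφ.isIdempotentElem_mul_of_map_eq hab hb hab' ha0
  have hf := hφ.isIdempotentElem_mul_of_map_eq hab.symm ha hba' hb0
  calc
    a * a' = a * b' * (b * a') := by rw [← mul_assoc, hab']
    _ = b * a' * (a * b') := hcomm _ _ he hf
    _ = b * b' := by rw [← mul_assoc, hba']

theorem conj_eq_conj_of_map_eq (hφ : IsPureGrading_s10 φ)
    (hcomm : ∀ e f : S, IsIdempotentElem e → IsIdempotentElem f → Commute e f)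
    (hx : IsIdempotentElem x) (hxa : x * (a' * a) = x) (hxb : x * (b' * b) = x)
    (hab : φ (a * x) = φ (b * x)) (hax : a * x ≠ 0) : a * x * a' = b * x * b' := by
  have hsa : x * a' * (a * x) = x := source_restrict_eq hx hxa
  have hsb : x * b' * (b * x) = x := source_restrict_eq hx hxb
  have ha : a * x * (x * a') * (a * x) = a * x := by rw [mul_assoc, hsa, mul_assoc, hx]
  have hb : b * x * (x * b') * (b * x) = b * x := by rw [mul_assoc, hsb, mul_assoc, hx]
  have hrange := hφ.range_eq_of_source_eq hcomm hab ha hb (hsa.trans hsb.symm) hax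
  simpa only [← mul_assoc, hx.mul_mul_self] using hrange

end IsPureGrading_s10

theorem stmt10_general {S G : Type*} [SemigroupWithZero S] [MulOneClass G] {φ : S → G}
    (hφ : IsPureGrading_s10 φ)
    (hcomm : ∀ e f : S, IsIdempotentElem e → IsIdempotentElem f → Commute e f)
    {s s' t t' u u' x : S} (hu : φ u = φ s * φ t) (hx : IsIdempotentElem x)
    (hxt : x * (t' * t) = x) (htxs : t * x * t' * (s' * s) = t * x * t')
    (hxu : x * (u' * u) = x) : s * (t * x * t') * s' = u * x * u' := by
  rcases eq_or_ne x 0 with rfl | hx0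
  · simp only [mul_zero, zero_mul]
  have hxst : x * (t' * s' * (s * t)) = x := mul_source_mul_eq_self_of_conj hx hxt htxs
  have hstx : s * t * x ≠ 0 := right_ne_zero_of_mul ((source_restrict_eq hx hxst).trans_ne hx0)
  have hux : u * x ≠ 0 := right_ne_zero_of_mul ((source_restrict_eq hx hxu).trans_ne hx0)
  have hdeg : φ (s * t * x) = φ (u * x) := by
    rw [hφ.map_mul_of_isIdempotentElem_right hx hstx, hφ.map_mul_of_isIdempotentElem_right hx hux,
      hφ.map_mul (left_ne_zero_of_mul hstx), hu]
  calc
    s * (t * x * t') * s' = s * t * x * (t' * s') := by simp only [mul_assoc]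
    _ = u * x * u' := hφ.conj_eq_conj_of_map_eq hcomm hx hxst hxu hdeg hstx

theorem stmt10 {S G : Type*} [SemigroupWithZero S] [Group G]
    (istar : S → S)
    (hinv1 : ∀ s : S, s * istar s * s = s)
    (hinv2 : ∀ s : S, istar s * s * istar s = istar s)
    (hcomm : ∀ e f : S, e * e = e → f * f = f → e * f = f * e)
    (φ : S → G)
    (hgr : ∀ a b : S, a ≠ 0 → b ≠ 0 → a * b ≠ 0 → φ (a * b) = φ a * φ b)
    (hpure : ∀ s : S, s ≠ 0 → (φ s = 1 ↔ s * s = s))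
    (s t u : S) (hs0 : s ≠ 0) (ht0 : t ≠ 0) (hu0 : u ≠ 0)
    (hu : φ u = φ s * φ t)
    (x : S) (hx : x * x = x) (hx0 : x ≠ 0)
    (hxt : x * (istar t * t) = x)
    (htxs : (t * x * istar t) * (istar s * s) = t * x * istar t)
    (hxu : x * (istar u * u) = x) :
    s * (t * x * istar t) * istar s = u * x * istar u := by
  have hφ : IsPureGrading_s10 φ :=
    ⟨fun h ↦ hgr _ _ (left_ne_zero_of_mul h) (right_ne_zero_of_mul h) h, hpure _⟩
  exact stmt10_general hφ hcomm hu hx hxt htxs hxu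
end
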